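/- Let κ be regular and κ ≤ θ₁ ≤ θ₂ cardinals. If the Baire number 𝔫_κ^{θ₂} of (2^{θ₂})_κ equals θ₁, then 𝔫_κ^{θ₁} = θ₁. -/

import Mathlib

open Cardinal Set

universe u

/-- `ExtFn q p` : the partial function `q` extends `p`. -/
def ExtFn {θ : Type u} (q p : θ → Option Bool) : Prop :=
  ∀ x b, p x = some b → q x = some b

/-- `Fn κ θ` : partial functions `θ → 2` of size `< κ`. -/
def Fn (κ : Cardinal.{u}) (θ : Type u) : Set (θ → Option Bool) :=
  {p | #{x | p x ≠ none} < κ}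

/-- The basic open set determined by a condition `p`. -/
def cylinder {θ : Type u} (p : θ → Option Bool) : Set (θ → Bool) :=
  {f | ∀ x b, p x = some b → f x = b}

/-- The topology of the space `(2^θ)_κ`. -/
def kTop (κ : Cardinal.{u}) (θ : Type u) : TopologicalSpace (θ → Bool) :=
  TopologicalSpace.generateFrom {U | ∃ p ∈ Fn κ θ, U = cylinder p}

/-- The Baire number of the space `(2^θ)_κ` : the least cardinality of a family of
dense open sets with empty intersection. -/
noncomputable def spaceBaire (κ : Cardinal.{u}) (θ : Type u) : Cardinal.{u} :=
  sInf {c | ∃ F : Set (Set (θ → Bool)), #F = c ∧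
    (∀ U ∈ F, @IsOpen _ (kTop κ θ) U ∧ @Dense _ (kTop κ θ) U) ∧ ⋂₀ F = ∅}

/-- `𝔫_κ^θ` for cardinals `κ ≤ θ`. -/
noncomputable def nBaire (κ θ : Cardinal.{u}) : Cardinal.{u} :=
  spaceBaire κ θ.out

/-!
If `κ < 2 ^ ν` for some `ν < κ`, then `𝔫_κ^θ = κ⁺` for every `θ ≥ κ`: reading a point of `2^(κ × ν)`
as `κ` many rows, each of `κ⁺` prescribed elements of `2^ν` occurs as a row on a dense open set.
Otherwise `κ ^ ν = κ` for all `0 < ν < κ`, and a closing-off argument shows that every dense open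
set contains one that depends on `κ` many coordinates only. A family of `𝔫_κ^θ` dense open sets
then involves `𝔫_κ^θ` many coordinates, so it can be transferred to any index set of at least that
size. Together with antitonicity this makes `𝔫_κ` constant on the interval `[𝔫_κ^θ, θ]`.
-/

open scoped Topology

/-- The set of points that agree with `f` on `s`. When `#s < κ` these are the cylinders of the
members of `Fn κ θ`, a condition being encoded by a total function together with its domain. -/
def box {θ : Type u} (f : θ → Bool) (s : Set θ) : Set (θ → Bool) :=
  {g | EqOn g f s}

/-- The canonical base of `(2^θ)_κ`. -/
def smallBoxes (κ : Cardinal.{u}) (θ : Type u) : Set (Set (θ → Bool)) :=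
  {V | ∃ (f : θ → Bool) (s : Set θ), #s < κ ∧ box f s = V}

/-- The dense open subsets of `(2^θ)_κ`. -/
def IsDenseOpen (κ : Cardinal.{u}) {θ : Type u} (U : Set (θ → Bool)) : Prop :=
  IsOpen[kTop κ θ] U ∧ @Dense _ (kTop κ θ) U

section Box

variable {θ : Type u}

theorem mem_box {f g : θ → Bool} {s : Set θ} : g ∈ box f s ↔ EqOn g f s :=
  Iff.rfl

theorem self_mem_box (f : θ → Bool) (s : Set θ) : f ∈ box f s :=
  eqOn_refl f s

theorem box_subset_box (f : θ → Bool) {s t : Set θ} (h : s ⊆ t) : box f t ⊆ box f s :=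
  fun _ hg => hg.mono h

theorem box_eq_of_mem {f g : θ → Bool} {s : Set θ} (h : g ∈ box f s) : box g s = box f s :=
  ext fun _ => ⟨fun hk => hk.trans h, fun hk => hk.trans h.symm⟩

theorem box_union (f : θ → Bool) (s t : Set θ) : box f (s ∪ t) = box f s ∩ box f t :=
  ext fun _ => eqOn_union

theorem exists_iInter_box_eq {J : Type*} (f : J → θ → Bool) (s : J → Set θ)
    (h : ∀ j k, (box (f j) (s j) ∩ box (f k) (s k)).Nonempty) :
    ∃ g, ⋂ j, box (f j) (s j) = box g (⋃ j, s j) := by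
  have agree {j k x} (hj : x ∈ s j) (hk : x ∈ s k) : f j x = f k x := by
    obtain ⟨g, hgj, hgk⟩ := h j k
    rw [← hgj hj, hgk hk]
  classical
  let g x := if hx : ∃ j, x ∈ s j then f hx.choose x else false
  have hg j : g ∈ box (f j) (s j) := fun x hx => by
    have hx' : ∃ j, x ∈ s j := ⟨j, hx⟩
    simp only [g, dif_pos hx', agree hx'.choose_spec hx]
  refine ⟨g, ?_⟩
  simp_rw [← fun j => box_eq_of_mem (hg j)]
  ext h
  simp only [mem_iInter, mem_box, EqOn, mem_iUnion]
  exact ⟨fun hh x ⟨j, hx⟩ => hh j hx, fun hh j x hx => hh ⟨j, hx⟩⟩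

end Box

section Topology

variable {κ : Cardinal.{u}} {θ : Type u}

theorem kTop_eq_generateFrom_smallBoxes :
    kTop κ θ = TopologicalSpace.generateFrom (smallBoxes κ θ) := by
  classical
  refine congrArg TopologicalSpace.generateFrom (Subset.antisymm ?_ ?_)
  · rintro _ ⟨p, hp, rfl⟩
    refine ⟨fun x => (p x).getD false, {x | p x ≠ none}, hp, ?_⟩
    ext f
    refine forall_congr' fun x => ?_
    cases h : p x <;> simp [h]
  · rintro _ ⟨f, s, hs, rfl⟩
    refine ⟨fun x => if x ∈ s then some (f x) else none, ?_, ?_⟩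
    · simpa [Fn] using hs
    · ext g
      refine forall_congr' fun x => ?_
      by_cases hx : x ∈ s <;> simp [hx]

theorem isTopologicalBasis_smallBoxes (hκ : ℵ₀ ≤ κ) :
    @TopologicalSpace.IsTopologicalBasis _ (kTop κ θ) (smallBoxes κ θ) := by
  let := kTop κ θ
  refine ⟨?_, ?_, kTop_eq_generateFrom_smallBoxes⟩
  · rintro _ ⟨f, s, hs, rfl⟩ _ ⟨g, t, ht, rfl⟩ h ⟨hf, hg⟩
    refine ⟨_, ⟨h, s ∪ t, ?_, rfl⟩, self_mem_box h _, ?_⟩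
    · exact (mk_union_le s t).trans_lt (add_lt_of_lt hκ hs ht)
    · rw [box_union, box_eq_of_mem hf, box_eq_of_mem hg]
  · refine sUnion_eq_univ_iff.2 fun f => ⟨_, ⟨f, ∅, ?_, rfl⟩, self_mem_box f ∅⟩
    simpa using aleph0_pos.trans_le hκ

theorem isOpen_box (f : θ → Bool) {s : Set θ} (hs : #s < κ) : IsOpen[kTop κ θ] (box f s) := by
  rw [kTop_eq_generateFrom_smallBoxes]
  exact TopologicalSpace.isOpen_generateFrom_of_mem ⟨f, s, hs, rfl⟩

theorem isOpen_kTop_iff (hκ : ℵ₀ ≤ κ) {U : Set (θ → Bool)} :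
    IsOpen[kTop κ θ] U ↔ ∀ f ∈ U, ∃ s : Set θ, #s < κ ∧ box f s ⊆ U := by
  let := kTop κ θ
  rw [(isTopologicalBasis_smallBoxes hκ).isOpen_iff]
  refine forall₂_congr fun f _ => ⟨?_, ?_⟩
  · rintro ⟨_, ⟨g, s, hs, rfl⟩, hf, hU⟩
    exact ⟨s, hs, (box_eq_of_mem hf).trans_subset hU⟩
  · rintro ⟨s, hs, hU⟩
    exact ⟨_, ⟨f, s, hs, rfl⟩, self_mem_box f s, hU⟩

theorem dense_kTop_iff (hκ : ℵ₀ ≤ κ) {U : Set (θ → Bool)} :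
    @Dense _ (kTop κ θ) U ↔ ∀ (f : θ → Bool) (s : Set θ), #s < κ → (box f s ∩ U).Nonempty := by
  let := kTop κ θ
  rw [(isTopologicalBasis_smallBoxes hκ).dense_iff]
  refine ⟨fun h f s hs => h _ ⟨f, s, hs, rfl⟩ ⟨f, self_mem_box f s⟩, ?_⟩
  rintro h _ ⟨f, s, hs, rfl⟩ -
  exact h f s hs

theorem iInter_mem_smallBoxes (hκ : κ.IsRegular) {J : Type u} (hJ : #J < κ)
    {V : J → Set (θ → Bool)} (hV : ∀ j, V j ∈ smallBoxes κ θ)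
    (hVV : ∀ j k, (V j ∩ V k).Nonempty) : ⋂ j, V j ∈ smallBoxes κ θ := by
  choose f s hs hfs using hV
  obtain rfl : (fun j => box (f j) (s j)) = V := funext hfs
  obtain ⟨g, hg⟩ := exists_iInter_box_eq f s hVV
  exact ⟨g, _, (card_iUnion_lt_iff_forall_of_isRegular hκ hJ).2 hs, hg.symm⟩

theorem continuous_kTop_comp (hκ : ℵ₀ ≤ κ) {θ' : Type u} (j : θ → θ') :
    Continuous[kTop κ θ', kTop κ θ] (· ∘ j) := by
  let := kTop κ θ
  let := kTop κ θ'
  refine (isTopologicalBasis_smallBoxes hκ).continuous_iff.2 ?_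
  rintro _ ⟨f, s, hs, rfl⟩
  refine (isOpen_kTop_iff hκ).2 fun g hg => ⟨j '' s, mk_image_le.trans_lt hs, fun h hh x hx => ?_⟩
  exact (hh (mem_image_of_mem j hx)).trans (hg hx)

theorem isOpenMap_kTop_comp (hκ : ℵ₀ ≤ κ) {θ' : Type u} {j : θ → θ'} (hj : j.Injective) :
    @IsOpenMap _ _ (kTop κ θ') (kTop κ θ) (· ∘ j) := by
  let := kTop κ θ
  let := kTop κ θ'
  refine (isTopologicalBasis_smallBoxes hκ).isOpenMap_iff.2 ?_
  rintro _ ⟨f, s, hs, rfl⟩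
  suffices h : (· ∘ j) '' box f s = box (f ∘ j) (j ⁻¹' s) from
    h ▸ isOpen_box _ ((mk_preimage_of_injective j s hj).trans_lt hs)
  refine Subset.antisymm (image_subset_iff.2 fun g hg x hx => hg hx) fun g hg => ?_
  refine ⟨Function.extend j g f, fun y hy => ?_, Function.extend_comp hj g f⟩
  by_cases h : ∃ x, j x = y
  · obtain ⟨x, rfl⟩ := h
    rw [hj.extend_apply]
    exact hg hy
  · exact Function.extend_apply' _ _ _ h

end Topology

namespace IsDenseOpen

variable {κ : Cardinal.{u}} {θ : Type u} {U : Set (θ → Bool)}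

theorem exists_box_subset (hκ : ℵ₀ ≤ κ) (hU : IsDenseOpen κ U) (f : θ → Bool) {s : Set θ}
    (hs : #s < κ) : ∃ g ∈ box f s, ∃ t : Set θ, #t < κ ∧ s ⊆ t ∧ box g t ⊆ U := by
  obtain ⟨g, hgf, hg⟩ := (dense_kTop_iff hκ).1 hU.2 f s hs
  obtain ⟨t, ht, htU⟩ := (isOpen_kTop_iff hκ).1 hU.1 g hg
  exact ⟨g, hgf, s ∪ t, (mk_union_le s t).trans_lt (add_lt_of_lt hκ hs ht), subset_union_left,
    (box_subset_box g subset_union_right).trans htU⟩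

theorem preimage_comp (hκ : ℵ₀ ≤ κ) {θ' : Type u} {j : θ → θ'} (hj : j.Injective)
    (hU : IsDenseOpen κ U) : IsDenseOpen κ ((· ∘ j) ⁻¹' U : Set (θ' → Bool)) := by
  let := kTop κ θ
  let := kTop κ θ'
  exact ⟨hU.1.preimage (continuous_kTop_comp hκ j), hU.2.preimage (isOpenMap_kTop_comp hκ hj)⟩

end IsDenseOpen

theorem isDenseOpen_compl_singleton {κ : Cardinal.{u}} (hκ : ℵ₀ ≤ κ) {θ : Type u} (hθ : κ ≤ #θ)
    (f : θ → Bool) : IsDenseOpen κ {f}ᶜ := by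
  classical
  constructor
  · refine (isOpen_kTop_iff hκ).2 fun g hg => ?_
    obtain ⟨x, hx⟩ := Function.ne_iff.1 hg
    refine ⟨{x}, by simpa using one_lt_aleph0.trans_le hκ, ?_⟩
    rintro _ hf rfl
    exact hx (hf rfl).symm
  · refine (dense_kTop_iff hκ).2 fun g s hs => ?_
    obtain ⟨x, hx⟩ : ∃ x, x ∉ s := (ne_univ_iff_exists_notMem s).1 <| by
      rintro rfl
      exact (mk_univ.symm.trans_lt hs).not_ge hθ
    refine ⟨Function.update g x (!f x), fun y hy => ?_, fun h => ?_⟩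
    · exact Function.update_of_ne (ne_of_mem_of_not_mem hy hx) _ _
    · simpa using congrFun h x

section SpaceBaire

variable {κ : Cardinal.{u}} {θ : Type u}

theorem spaceBaire_le {ι : Type u} {U : ι → Set (θ → Bool)} (hU : ∀ i, IsDenseOpen κ (U i))
    (hU₀ : ⋂ i, U i = ∅) : spaceBaire κ θ ≤ #ι :=
  have h : spaceBaire κ θ ≤ #(range U) :=
    csInf_le' ⟨range U, rfl, forall_mem_range.2 hU, by rwa [sInter_range]⟩
  h.trans mk_range_le

theorem exists_isDenseOpen_iInter_eq_empty (hκ : ℵ₀ ≤ κ) (hθ : κ ≤ #θ) :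
    ∃ (ι : Type u) (U : ι → Set (θ → Bool)),
      #ι = spaceBaire κ θ ∧ (∀ i, IsDenseOpen κ (U i)) ∧ ⋂ i, U i = ∅ := by
  have hne : {c | ∃ F : Set (Set (θ → Bool)), #F = c ∧
      (∀ U ∈ F, IsDenseOpen κ U) ∧ ⋂₀ F = ∅}.Nonempty := by
    refine ⟨_, range fun f : θ → Bool => {f}ᶜ, rfl,
      forall_mem_range.2 (isDenseOpen_compl_singleton hκ hθ), ?_⟩
    rw [sInter_range, ← compl_iUnion, iUnion_of_singleton, compl_univ]
  obtain ⟨F, hF, hFU, hF₀⟩ : spaceBaire κ θ ∈ _ := csInf_mem hne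
  exact ⟨F, (↑), hF, fun U => hFU U U.2, by rwa [← sInter_eq_iInter]⟩

theorem spaceBaire_anti (hκ : ℵ₀ ≤ κ) {θ' : Type u} (hθ : κ ≤ #θ) (hθ' : #θ ≤ #θ') :
    spaceBaire κ θ' ≤ spaceBaire κ θ := by
  obtain ⟨ι, U, hι, hU, hU₀⟩ := exists_isDenseOpen_iInter_eq_empty hκ hθ
  obtain ⟨j⟩ := hθ'
  rw [← hι]
  refine spaceBaire_le (fun i => (hU i).preimage_comp hκ j.injective) ?_
  rw [← preimage_iInter, hU₀, preimage_empty]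

end SpaceBaire

section BaireCategory

theorem exists_antitone_forall_mem {P ι : Type*} [Preorder P] [Nonempty P] [LinearOrder ι]
    [WellFoundedLT ι] {D : ι → Set P} (hD : ∀ i (p : P), ∃ q ≤ p, q ∈ D i)
    (hP : ∀ (i : ι) (p : Iio i → P), Antitone p → ∃ q, ∀ j, q ≤ p j) :
    ∃ p : ι → P, Antitone p ∧ ∀ i, p i ∈ D i := by
  have hnext (i : ι) (p : Iio i → P) (hp : Antitone p) : ∃ q ∈ D i, ∀ j, q ≤ p j := by
    obtain ⟨q, hq⟩ := hP i p hp
    obtain ⟨r, hrq, hr⟩ := hD i q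
    exact ⟨r, hr, fun j => hrq.trans (hq j)⟩
  choose! next next_mem next_le using hnext
  let p : ι → P := WellFoundedLT.fix fun i ih => next i fun j => ih j j.2
  have hp i : p i = next i fun j => p j := WellFoundedLT.fix_eq _ i
  have antitone_of {s : Set ι} (hs : ∀ i ∈ s, ∀ j < i, p i ≤ p j) :
      Antitone fun i : s => p i := fun j k hjk => by
    rcases hjk.eq_or_lt with rfl | hlt
    exacts [le_rfl, hs k k.2 j hlt]
  have le_of_lt i : ∀ j < i, p i ≤ p j := by
    induction i using WellFoundedLT.induction with
    | ind i ih =>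
      intro j hj
      rw [hp i]
      exact next_le i _ (antitone_of ih) ⟨j, hj⟩
  refine ⟨p, fun j k hjk => ?_, fun i => ?_⟩
  · rcases hjk.eq_or_lt with rfl | hlt
    exacts [le_rfl, le_of_lt k j hlt]
  · rw [hp i]
    exact next_mem i _ (antitone_of fun j _ => le_of_lt j)

theorem nonempty_iInter_of_isDenseOpen {κ : Cardinal.{u}} (hκ : κ.IsRegular) {θ ι : Type u}
    (hι : #ι ≤ κ) {U : ι → Set (θ → Bool)} (hU : ∀ i, IsDenseOpen κ (U i)) :
    (⋂ i, U i).Nonempty := by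
  obtain ⟨_, _, hord⟩ := exists_ord_eq_type_lt ι
  have : Nonempty (smallBoxes κ θ) :=
    ⟨⟨box (fun _ => false) ∅, fun _ => false, ∅, by simpa using hκ.pos, rfl⟩⟩
  have hne (V : smallBoxes κ θ) : V.1.Nonempty := by
    obtain ⟨_, f, s, -, rfl⟩ := V
    exact ⟨f, self_mem_box f s⟩
  have hpair {J : Type u} [LinearOrder J] {V : J → smallBoxes κ θ} (hV : Antitone V) (j k : J) :
      ((V j).1 ∩ V k).Nonempty :=
    (hne (V (max j k))).mono (subset_inter (hV (le_max_left j k)) (hV (le_max_right j k)))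
  have hrefine (i : ι) (V : smallBoxes κ θ) : ∃ W ≤ V, W ∈ {W : smallBoxes κ θ | W.1 ⊆ U i} := by
    obtain ⟨_, f, s, hs, rfl⟩ := V
    obtain ⟨g, hg, t, ht, hst, hgU⟩ := (hU i).exists_box_subset hκ.aleph0_le f hs
    exact ⟨⟨_, g, t, ht, rfl⟩, (box_subset_box g hst).trans (box_eq_of_mem hg).subset, hgU⟩
  obtain ⟨V, hV, hVU⟩ := exists_antitone_forall_mem hrefine fun i V hV =>
    ⟨⟨_, iInter_mem_smallBoxes hκ ((mk_Iio_lt i hord).trans_le hι) (fun j => (V j).2) (hpair hV)⟩,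
      iInter_subset _⟩
  choose f s _ hfs using fun i => (V i).2
  obtain ⟨g, hg⟩ := exists_iInter_box_eq f s (by simpa only [hfs] using hpair hV)
  have hgV : g ∈ ⋂ i, (V i).1 := by
    simp_rw [← hfs, hg]
    exact self_mem_box g _
  exact ⟨g, iInter_mono hVU hgV⟩

theorem lt_spaceBaire {κ : Cardinal.{u}} (hκ : κ.IsRegular) {θ : Type u} (hθ : κ ≤ #θ) :
    κ < spaceBaire κ θ := by
  obtain ⟨ι, U, hι, hU, hU₀⟩ := exists_isDenseOpen_iInter_eq_empty hκ.aleph0_le hθ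
  by_contra! h
  exact (nonempty_iInter_of_isDenseOpen hκ (hι.trans_le h) hU).ne_empty hU₀

end BaireCategory

section Collapse

variable {κ : Cardinal.{u}} {I X : Type u}

theorem isDenseOpen_setOf_exists_row_eq (hκ : ℵ₀ ≤ κ) (hI : κ ≤ #I) (hX : #X < κ)
    (a : X → Bool) : IsDenseOpen κ {f : I × X → Bool | ∃ i, ∀ x, f (i, x) = a x} := by
  classical
  constructor
  · refine (isOpen_kTop_iff hκ).2 ?_
    rintro f ⟨i, hi⟩
    refine ⟨range (Prod.mk i), mk_range_le.trans_lt hX, fun g hg => ⟨i, fun x => ?_⟩⟩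
    exact (hg (mem_range_self x)).trans (hi x)
  · refine (dense_kTop_iff hκ).2 fun f s hs => ?_
    obtain ⟨i, hi⟩ : ∃ i, i ∉ Prod.fst '' s := (ne_univ_iff_exists_notMem _).1 fun h => by
      have hfst : #(Prod.fst '' s) < κ := mk_image_le.trans_lt hs
      rw [h, mk_univ] at hfst
      exact hfst.not_ge hI
    refine ⟨fun p => if p.1 = i then a p.2 else f p, fun p hp => if_neg ?_, i, fun x => if_pos rfl⟩
    exact ne_of_mem_of_not_mem (mem_image_of_mem _ hp) hi

/-- A point of `2^(I × X)` has at most `#I` many rows, so it cannot have all the `a k` as rows. -/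
theorem spaceBaire_prod_le (hκ : ℵ₀ ≤ κ) (hI : κ ≤ #I) (hX : #X < κ) {K : Type u}
    {a : K → X → Bool} (ha : a.Injective) (hK : #I < #K) : spaceBaire κ (I × X) ≤ #K := by
  refine spaceBaire_le (fun k => isDenseOpen_setOf_exists_row_eq hκ hI hX (a k)) ?_
  refine eq_empty_of_forall_notMem fun f hf => ?_
  choose row hrow using mem_iInter.1 hf
  refine (mk_le_of_injective (f := row) fun k l hkl => ha (funext fun x => ?_)).not_gt hK
  rw [← hrow, hkl, hrow]

theorem spaceBaire_le_succ (hκ : ℵ₀ ≤ κ) {θ : Type u} (hθ : κ ≤ #θ) {ν : Cardinal.{u}}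
    (hν : ν < κ) (h : κ < 2 ^ ν) : spaceBaire κ θ ≤ Order.succ κ := by
  have hν₀ : ν ≠ 0 := by
    rintro rfl
    exact ((one_lt_aleph0.trans_le hκ).trans h).ne' (power_zero _)
  have hprod : #(κ.out × ν.out) = κ := by simpa using mul_eq_left hκ hν.le hν₀
  obtain ⟨a⟩ : Nonempty ((Order.succ κ).out ↪ (ν.out → Bool)) := by
    rw [← le_def]
    simpa using h
  calc spaceBaire κ θ ≤ spaceBaire κ (κ.out × ν.out) :=
        spaceBaire_anti hκ hprod.ge (hprod.trans_le hθ)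
    _ ≤ #(Order.succ κ).out := spaceBaire_prod_le hκ (by simp) (by simpa) a.injective (by simp)
    _ = Order.succ κ := mk_out _

end Collapse

section Support

variable {κ : Cardinal.{u}}

theorem power_le_of_forall_two_power_le (hκ : κ.IsRegular) (h2 : ∀ ν < κ, 2 ^ ν ≤ κ)
    {ν : Cardinal.{u}} (hν : ν < κ) : κ ^ ν ≤ κ := by
  let α := κ.ord.ToType
  have hα : #α = κ := mk_ord_toType κ
  have hIio (a : α) : #(Iio a) < κ := by simpa [α] using mk_Iio_lt a
  have hbdd (f : ν.out → α) : ∃ a, ∀ x, f x < a := by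
    by_contra! hf
    have hcof : Order.cof α ≤ #(range f) := Order.cof_le fun a => by simpa using hf a
    rw [Ordinal.cof_toType, hκ.cof_ord] at hcof
    exact (hcof.trans mk_range_le).not_gt (by simpa using hν)
  have hsurj : Function.Surjective fun (p : Σ a : α, ν.out → Iio a) x => (p.2 x : α) := fun f =>
    let ⟨a, ha⟩ := hbdd f
    ⟨⟨a, fun x => ⟨f x, ha x⟩⟩, rfl⟩
  calc κ ^ ν = #(ν.out → α) := by simp [hα]
    _ ≤ #(Σ a : α, ν.out → Iio a) := mk_le_of_surjective hsurj
    _ = sum fun a : α => #(Iio a) ^ ν := by simp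
    _ ≤ sum fun _ : α => κ := sum_le_sum _ _ fun a =>
      calc #(Iio a) ^ ν ≤ (2 ^ #(Iio a)) ^ ν := power_le_power_right (cantor _).le
        _ = 2 ^ (#(Iio a) * ν) := (power_mul ..).symm
        _ ≤ κ := h2 _ (mul_lt_of_lt hκ.aleph0_le (hIio a) hν)
    _ = κ := by simp [hα, mul_eq_self hκ.aleph0_le]

theorem exists_mk_Iio_eq {ν : Cardinal.{u}} (hν : ν < κ) :
    ∃ i : κ.ord.ToType, #(Iio i) = ν := by
  let r : κ.ord.ToType → κ.ord.ToType → Prop := (· < ·)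
  have : IsWellOrder κ.ord.ToType r := isWellOrder_lt
  have hν' : ν.ord < Ordinal.type r := by simpa [r] using hν
  refine ⟨Ordinal.enum r ⟨ν.ord, hν'⟩, ?_⟩
  have h := Ordinal.card_typein (r := r) (Ordinal.enum r ⟨ν.ord, hν'⟩)
  rw [Ordinal.typein_enum, card_ord] at h
  exact h.symm

theorem exists_subset_range_of_mk_le {α β : Type u} [Nonempty α] {s : Set α} (hs : #s ≤ #β) :
    ∃ e : β → α, s ⊆ range e := by
  obtain ⟨j⟩ := hs
  refine ⟨Function.extend j (↑) fun _ => Classical.arbitrary α, fun x hx => ⟨j ⟨x, hx⟩, ?_⟩⟩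
  exact j.injective.extend_apply _ _ _

theorem exists_closed_set_mk_le {μ : Cardinal.{u}} (hμ : ℵ₀ ≤ μ) (hκμ : κ ≤ μ)
    (hpow : ∀ ν < κ, μ ^ ν ≤ μ) {α : Type u} {Φ : Set α → Set α}
    (hΦ : ∀ s : Set α, #s < κ → #(Φ s) ≤ μ) :
    ∃ A : Set α, #A ≤ μ ∧ ∀ s : Set α, s ⊆ A → #s < κ → Φ s ⊆ A := by
  cases isEmpty_or_nonempty α
  · exact ⟨∅, by simp, fun s _ _ => (Φ s).eq_empty_of_isEmpty.subset⟩
  choose! e he using fun (s : Set α) (hs : #s < κ) =>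
    exists_subset_range_of_mk_le (β := μ.out) ((hΦ s hs).trans_eq (mk_out μ).symm)
  -- Elements of the closure are named by well-founded terms: a node `(i, k)` has the children
  -- `Iio i`, whose values make up a set `s`, and names the `k`-th element of `Φ s`.
  let β (a : κ.ord.ToType × μ.out) : Type u := Iio a.1
  let val : WType β → α := WType.elim α fun p : Σ a, β a → α => e (range p.2) p.1.2
  have hβ (a : κ.ord.ToType × μ.out) : #(β a) < κ := by simpa using mk_Iio_lt a.1
  have hW : #(WType β) ≤ μ := WType.cardinalMk_le_of_le <|
    calc (sum fun a => μ ^ #(β a)) ≤ sum fun _ : κ.ord.ToType × μ.out => μ :=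
        sum_le_sum _ _ fun a => hpow _ (hβ a)
      _ = κ * μ * μ := by simp
      _ ≤ μ := mul_le_of_le hμ (mul_le_of_le hμ hκμ le_rfl) le_rfl
  refine ⟨range val, mk_range_le.trans hW, fun s hsA hs x hx => ?_⟩
  obtain ⟨i, hi⟩ := exists_mk_Iio_eq hs
  obtain ⟨σ⟩ := Cardinal.eq.1 hi
  obtain ⟨k, rfl⟩ := he s hs hx
  choose w hw using fun y => hsA (σ y).2
  have hrange : (range fun y => val (w y)) = s := by
    simp_rw [hw]
    exact (σ.surjective.range_comp _).trans Subtype.range_coe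
  exact ⟨WType.mk (i, k) w, congrArg (e · k) hrange⟩

theorem IsDenseOpen.exists_closed_set (hκ : κ.IsRegular) (h2 : ∀ ν < κ, 2 ^ ν ≤ κ) {θ : Type u}
    {U : Set (θ → Bool)} (hU : IsDenseOpen κ U) :
    ∃ A : Set θ, #A ≤ κ ∧ ∀ (f : θ → Bool) (s : Set θ), s ⊆ A → #s < κ →
      ∃ g ∈ box f s, ∃ t : Set θ, t ⊆ A ∧ #t < κ ∧ box g t ⊆ U := by
  choose! g hg t ht _ hgU using fun (f : θ → Bool) (s : Set θ) (hs : #s < κ) =>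
    hU.exists_box_subset hκ.aleph0_le f hs
  let ext (s : Set θ) (b : s → Bool) : θ → Bool := Function.extend (↑) b fun _ => false
  let Φ (s : Set θ) : Set θ := ⋃ b : s → Bool, t (ext s b) s
  have hΦ (s : Set θ) (hs : #s < κ) : #(Φ s) ≤ κ :=
    calc #(Φ s) ≤ sum fun b : s → Bool => #(t (ext s b) s) := mk_iUnion_le_sum_mk
      _ ≤ sum fun _ : s → Bool => κ := sum_le_sum _ _ fun b => (ht _ s hs).le
      _ = 2 ^ #s * κ := by simp
      _ ≤ κ := mul_le_of_le hκ.aleph0_le (h2 _ hs) le_rfl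
  obtain ⟨A, hA, hAΦ⟩ := exists_closed_set_mk_le hκ.aleph0_le le_rfl
    (fun ν => power_le_of_forall_two_power_le hκ h2) hΦ
  refine ⟨A, hA, fun f s hsA hs => ?_⟩
  let f' := ext s (s.domRestrict f)
  have hf' : f' ∈ box f s := fun x hx => Subtype.val_injective.extend_apply _ _ ⟨x, hx⟩
  exact ⟨g f' s, box_eq_of_mem hf' ▸ hg f' s hs, t f' s,
    (subset_iUnion (fun b => t (ext s b) s) _).trans (hAΦ s hsA hs), ht f' s hs, hgU f' s hs⟩

theorem IsDenseOpen.exists_domRestrict_preimage_subset (hκ : κ.IsRegular)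
    (h2 : ∀ ν < κ, 2 ^ ν ≤ κ) {θ : Type u} {U : Set (θ → Bool)} (hU : IsDenseOpen κ U) :
    ∃ A : Set θ, #A ≤ κ ∧ ∃ W : Set (A → Bool), IsDenseOpen κ W ∧ A.domRestrict ⁻¹' W ⊆ U := by
  obtain ⟨A, hA, hAU⟩ := hU.exists_closed_set hκ h2
  let := kTop κ A
  let W : Set (A → Bool) := interior {f | ∀ h : θ → Bool, A.domRestrict h = f → h ∈ U}
  refine ⟨A, hA, W, ⟨isOpen_interior, (dense_kTop_iff hκ.aleph0_le).2 fun f s hs => ?_⟩,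
    fun h hh => interior_subset hh h rfl⟩
  obtain ⟨g, hg, t, htA, ht, hgU⟩ := hAU (Function.extend (↑) f fun _ => false) ((↑) '' s)
    (Subtype.coe_image_subset A s) (mk_image_le.trans_lt hs)
  have hopen : IsOpen (box (A.domRestrict g) ((↑) ⁻¹' t)) :=
    isOpen_box _ ((mk_preimage_of_injective _ t Subtype.val_injective).trans_lt ht)
  refine ⟨A.domRestrict g, fun x hx => ?_, interior_maximal ?_ hopen (self_mem_box _ _)⟩
  · exact (hg (mem_image_of_mem _ hx)).trans (Subtype.val_injective.extend_apply _ _ x)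
  · rintro _ hf h rfl
    exact hgU fun x hx => @hf ⟨x, htA hx⟩ hx

theorem spaceBaire_le_of_forall_two_power_le (hκ : κ.IsRegular) (h2 : ∀ ν < κ, 2 ^ ν ≤ κ)
    {θ θ' : Type u} (hθ : κ ≤ #θ) (hθ' : spaceBaire κ θ ≤ #θ') :
    spaceBaire κ θ' ≤ spaceBaire κ θ := by
  have hκθ' : κ ≤ #θ' := (lt_spaceBaire hκ hθ).le.trans hθ'
  obtain ⟨ι, U, hι, hU, hU₀⟩ := exists_isDenseOpen_iInter_eq_empty hκ.aleph0_le hθ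
  choose A hA W hW hWU using fun i => (hU i).exists_domRestrict_preimage_subset hκ h2
  obtain ⟨j⟩ : #(⋃ i, A i) ≤ #θ' :=
    calc #(⋃ i, A i) ≤ sum fun i => #(A i) := mk_iUnion_le_sum_mk
      _ ≤ sum fun _ : ι => κ := sum_le_sum _ _ hA
      _ = #ι * κ := by simp
      _ ≤ #θ' := mul_le_of_le (hκ.aleph0_le.trans hκθ') (hι.trans_le hθ') hκθ'
  let incl i : A i → θ' := j ∘ inclusion (subset_iUnion A i)
  have hincl i : (incl i).Injective := j.injective.comp (inclusion_injective _)
  rw [← hι]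
  refine spaceBaire_le (fun i => (hW i).preimage_comp hκ.aleph0_le (hincl i)) ?_
  refine eq_empty_of_forall_notMem fun f hf => ?_
  let f' : θ → Bool := Function.extend Subtype.val (f ∘ j) fun _ => false
  have hf' i : (A i).domRestrict f' = f ∘ incl i :=
    congrArg (· ∘ inclusion (subset_iUnion A i))
      (Function.extend_comp Subtype.val_injective (f ∘ j) fun _ => false)
  have hf'U : f' ∈ ⋂ i, U i := mem_iInter.2 fun i => hWU i <| by
    rw [mem_preimage, hf']
    exact mem_iInter.1 hf i
  simp [hU₀] at hf'U

end Support

theorem spaceBaire_le_of_spaceBaire_le_mk {κ : Cardinal.{u}} (hκ : κ.IsRegular) {θ θ' : Type u}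
    (hθ : κ ≤ #θ) (hθ' : spaceBaire κ θ ≤ #θ') : spaceBaire κ θ' ≤ spaceBaire κ θ := by
  by_cases h2 : ∀ ν < κ, 2 ^ ν ≤ κ
  · exact spaceBaire_le_of_forall_two_power_le hκ h2 hθ hθ'
  · push Not at h2
    obtain ⟨ν, hν, hκν⟩ := h2
    have hlt := lt_spaceBaire hκ hθ
    exact (spaceBaire_le_succ hκ.aleph0_le (hlt.le.trans hθ') hν hκν).trans
      (Order.succ_le_of_lt hlt)

theorem baire_fixed_point_general {κ θ₁ θ₂ : Cardinal.{u}} (hκ : κ.IsRegular) (hκθ : κ ≤ θ₂)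
    (h2 : θ₁ ≤ θ₂) (h : nBaire κ θ₂ ≤ θ₁) : nBaire κ θ₁ = nBaire κ θ₂ := by
  have hθ₂ : κ ≤ #θ₂.out := by rwa [mk_out]
  have hθ₁ : spaceBaire κ θ₂.out ≤ #θ₁.out := by rwa [mk_out]
  refine (spaceBaire_le_of_spaceBaire_le_mk hκ hθ₂ hθ₁).antisymm ?_
  exact spaceBaire_anti hκ.aleph0_le ((lt_spaceBaire hκ hθ₂).le.trans hθ₁) (by simpa using h2)

/-- Fact 4: if `θ₁ ≤ θ₂` and `𝔫_κ^{θ₂} = θ₁`, then `𝔫_κ^{θ₁} = θ₁`. -/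
theorem baire_fixed_point (κ θ₁ θ₂ : Cardinal.{u}) (hκ : κ.IsRegular)
    (h1 : κ ≤ θ₁) (h2 : θ₁ ≤ θ₂) (h : nBaire κ θ₂ = θ₁) :
    nBaire κ θ₁ = θ₁ := by
  exact (baire_fixed_point_general hκ (h1.trans h2) h2 h.le).trans h
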